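/- arXiv:2206.13269 — 3 statements merged into one kernel-verified Lean document; each statement's English description precedes it below -/
import Mathlib

section
/- Let Q be any probability measure in the ambiguity set B_ε(P_n) built from the transportation cost c((x_1,y_1),(x_2,y_2)) = ‖x_1−x_2‖^p + ∞·|y_1−y_2|. Then the marginal of Q in the Y-coordinate equals the empirical measure (1/n)Σ_{i=1}^n δ_{y_i}, and the marginal of Q in the X-coordinates satisfies W_{c'}((π_X)_#Q, (1/n)Σ_{i=1}^n δ_{x_i}) ≤ ε, where W_{c'} is the optimal transport discrepancy on ℝ^d with cost c'(x_1,x_2) = ‖x_1−x_2‖^p. -/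
/-!
The infinite weight on `|y₁ - y₂|` forces every coupling of finite cost to be concentrated on
`{y₁ = y₂}` (`map_snd_eq_of_lintegral_droCost_ne_top`); since the discrepancy is at most `ε < ∞`,
such a coupling of `Q` and `P_n` exists, and so `Q` and `P_n` have the same `Y`-marginal. For the
`X`-marginals, pushing a coupling forward along the projection onto the `X`-coordinates gives a
coupling of the `X`-marginals whose cost is no larger
(`transportDiscrepancy_map_fst_le`), so the infimum can only decrease.
-/

open MeasureTheory ProbabilityTheory Filter ENNReal
open scoped RealInnerProductSpace Topology

noncomputable section

/-- The set of couplings of two measures on the same measurable space. -/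
def couplings {α : Type*} [MeasurableSpace α] (μ ν : Measure α) :
    Set (Measure (α × α)) :=
  {γ | γ.map Prod.fst = μ ∧ γ.map Prod.snd = ν}

/-- Optimal transport discrepancy `W_c(μ,ν) = inf over couplings γ of ∫ c dγ`. -/
noncomputable def transportDiscrepancy {α : Type*} [MeasurableSpace α]
    (c : α → α → ℝ≥0∞) (μ ν : Measure α) : ℝ≥0∞ :=
  ⨅ γ ∈ couplings μ ν, ∫⁻ z, c z.1 z.2 ∂γ

/-- Transportation cost `c((x₁,y₁),(x₂,y₂)) = ‖x₁ − x₂‖^p + ∞·|y₁ − y₂|` on `ℝ^d × ℝ`. -/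
noncomputable def droCost (p d : ℕ) (a b : EuclideanSpace ℝ (Fin d) × ℝ) : ℝ≥0∞ :=
  ENNReal.ofReal (‖a.1 - b.1‖ ^ p) + ⊤ * ENNReal.ofReal |a.2 - b.2|

/-- The empirical measure `(1/n) ∑ δ_{(x_i, y_i)}`. -/
noncomputable def empiricalMeasure {d n : ℕ} (x : Fin n → EuclideanSpace ℝ (Fin d))
    (y : Fin n → ℝ) : Measure (EuclideanSpace ℝ (Fin d) × ℝ) :=
  (n : ℝ≥0∞)⁻¹ • ∑ i, Measure.dirac (x i, y i)

/-- The Wasserstein ambiguity set `B_ε(P_n)`. -/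
def ambiguitySet (p : ℕ) {d n : ℕ} (x : Fin n → EuclideanSpace ℝ (Fin d))
    (y : Fin n → ℝ) (ε : ℝ) : Set (Measure (EuclideanSpace ℝ (Fin d) × ℝ)) :=
  {Q | IsProbabilityMeasure Q ∧
    transportDiscrepancy (droCost p d) Q (empiricalMeasure x y) ≤ ENNReal.ofReal ε}

lemma map_empiricalMeasure {d n : ℕ} {β : Type*} [MeasurableSpace β]
    (x : Fin n → EuclideanSpace ℝ (Fin d)) (y : Fin n → ℝ)
    {f : EuclideanSpace ℝ (Fin d) × ℝ → β} (hf : Measurable f) :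
    (empiricalMeasure x y).map f = (n : ℝ≥0∞)⁻¹ • ∑ i, Measure.dirac (f (x i, y i)) := by
  rw [empiricalMeasure, Measure.map_smul, Measure.map_finset_sum hf.aemeasurable]
  simp only [Measure.map_dirac' hf]

lemma measurable_droCost (p d : ℕ) :
    Measurable fun z : (EuclideanSpace ℝ (Fin d) × ℝ) × (EuclideanSpace ℝ (Fin d) × ℝ) =>
      droCost p d z.1 z.2 := by
  unfold droCost
  fun_prop

/-- A coupling of finite cost lives on `{y₁ = y₂}`, so its two `Y`-marginals agree. -/
lemma map_snd_eq_of_lintegral_droCost_ne_top {p d : ℕ}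
    {μ ν : Measure (EuclideanSpace ℝ (Fin d) × ℝ)}
    {γ : Measure ((EuclideanSpace ℝ (Fin d) × ℝ) × (EuclideanSpace ℝ (Fin d) × ℝ))}
    (hγ : γ ∈ couplings μ ν) (hfin : ∫⁻ z, droCost p d z.1 z.2 ∂γ ≠ ⊤) :
    μ.map Prod.snd = ν.map Prod.snd := by
  obtain ⟨rfl, rfl⟩ := hγ
  rw [Measure.map_map measurable_snd measurable_fst, Measure.map_map measurable_snd measurable_snd]
  refine Measure.map_congr ?_
  filter_upwards [ae_lt_top (measurable_droCost p d) hfin] with z hz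
  by_contra hne
  have hpos : ENNReal.ofReal |z.1.2 - z.2.2| ≠ 0 := by
    have : 0 < |z.1.2 - z.2.2| := abs_pos.mpr (sub_ne_zero.mpr hne)
    simpa using this
  simp [droCost, ENNReal.top_mul hpos] at hz

/-- Projecting couplings onto the `X`-coordinates does not increase the cost. -/
lemma transportDiscrepancy_map_fst_le (p d : ℕ)
    (μ ν : Measure (EuclideanSpace ℝ (Fin d) × ℝ)) :
    transportDiscrepancy (fun a b => ENNReal.ofReal (‖a - b‖ ^ p))
        (μ.map Prod.fst) (ν.map Prod.fst) ≤ transportDiscrepancy (droCost p d) μ ν := by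
  refine le_iInf₂ fun γ hγ => ?_
  obtain ⟨rfl, rfl⟩ := hγ
  have hm : Measurable (Prod.map Prod.fst Prod.fst :
      (EuclideanSpace ℝ (Fin d) × ℝ) × (EuclideanSpace ℝ (Fin d) × ℝ) → _) :=
    measurable_fst.prodMap measurable_fst
  have hmem : γ.map (Prod.map Prod.fst Prod.fst) ∈
      couplings ((γ.map Prod.fst).map Prod.fst) ((γ.map Prod.snd).map Prod.fst) := by
    constructor
    · rw [Measure.map_map measurable_fst hm, Measure.map_map measurable_fst measurable_fst]
      rfl
    · rw [Measure.map_map measurable_snd hm, Measure.map_map measurable_fst measurable_snd]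
      rfl
  refine (iInf₂_le _ hmem).trans ?_
  rw [lintegral_map (by fun_prop) hm]
  exact lintegral_mono fun z => le_self_add

/-- Lemma: structure of the ambiguity set.  If `Q ∈ B_ε(P_n)` for the cost
`c((x₁,y₁),(x₂,y₂)) = ‖x₁−x₂‖^p + ∞·|y₁−y₂|`, then the `Y`-marginal of `Q` is the empirical
measure `(1/n)∑ δ_{y_i}`, and the `X`-marginal satisfies
`W_{c'}((π_X)_#Q, (1/n)∑ δ_{x_i}) ≤ ε` with `c'(x₁,x₂) = ‖x₁−x₂‖^p`. -/
theorem marginals_of_mem_ambiguitySet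
    {d n : ℕ} (hn : 0 < n) (p : ℕ) (hp : p = 1 ∨ p = 2)
    (x : Fin n → EuclideanSpace ℝ (Fin d)) (y : Fin n → ℝ)
    (ε : ℝ) (hε : 0 ≤ ε)
    (Q : Measure (EuclideanSpace ℝ (Fin d) × ℝ))
    (hQ : Q ∈ ambiguitySet p x y ε) :
    Q.map Prod.snd = (n : ℝ≥0∞)⁻¹ • ∑ i, Measure.dirac (y i) ∧
    transportDiscrepancy (fun a b => ENNReal.ofReal (‖a - b‖ ^ p))
        (Q.map Prod.fst) ((n : ℝ≥0∞)⁻¹ • ∑ i, Measure.dirac (x i))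
      ≤ ENNReal.ofReal ε := by
  obtain ⟨-, hW⟩ := hQ
  constructor
  · have hlt : transportDiscrepancy (droCost p d) Q (empiricalMeasure x y) < ⊤ :=
      hW.trans_lt ENNReal.ofReal_lt_top
    simp only [transportDiscrepancy, iInf_lt_iff] at hlt
    obtain ⟨γ, hγ, hfin⟩ := hlt
    rw [map_snd_eq_of_lintegral_droCost_ne_top hγ hfin.ne,
      map_empiricalMeasure x y measurable_snd]
  · rw [← map_empiricalMeasure x y measurable_fst]
    exact (transportDiscrepancy_map_fst_le p d Q _).trans hW
end
end

section
/- Assume L: ℝ → ℝ is proper, continuous, convex, and M-smooth (differentiable with M-Lipschitz gradient), that Θ = {θ ∈ ℝ^d : ‖θ‖ ≤ R_θ√d}, and that there is a constant L̲_n with 0 < L̲_n ≤ E_{P_n}[L'(Y − θᵀX)²] for all θ ∈ Θ. If ε = ε₀/n with ε₀ ≤ ρ^{-1} M^{-2} R_θ^{-2} L̲_n, where ρ = d/n, then the dual problem inf_{θ∈Θ, λ≥0} sup_{u∈ℝⁿ} λε + (1/n)Σ_{i=1}^n [u_i(y_i − θᵀx_i) + (u_i²/(4λ))‖θ‖² −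 L*(u_i)] has the same optimal value when λ is restricted to Λ = {λ ≥ 0 : λ ≥ M R_θ √d ‖θ‖/2}, and on Λ the objective function is concave in u (so the restricted problem is a convex-concave minimax problem). -/
/-!
Restricting the multiplier does not change the value: fix `θ ≠ 0` and put
`λ₀ = M R_θ √d ‖θ‖ / 2`. For `λ < λ₀` the inner supremum at `λ` is at least the one at `λ₀`.
Indeed, let `zᵢ = yᵢ − θᵀxᵢ`. By Fenchel–Young, replacing each `uᵢ` with `|uᵢ| < |L'(zᵢ)|` by
`L'(zᵢ)`, the maximiser of `u ↦ u zᵢ − L*(u)`, can only increase the objective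
(`exists_better_coord`). After the replacement `(1/n) ∑ uᵢ² ≥ L̲ₙ`, and then lowering the
multiplier from `λ₀` to `λ` gains at least `(λ₀ − λ) ‖θ‖² L̲ₙ / (4 λ₀²)` in the quadratic term,
which the bound on `ε₀` makes at least the loss `(λ₀ − λ) ε` in the linear one
(`multiplier_gain`).

Concavity on `Λ`: since `(M/2) z² − L(z)` is convex, `L*` is `1/M`-strongly convex
(`conjE_strong`), while `λ ≥ λ₀` and `‖θ‖ ≤ R_θ √d` give `‖θ‖² / (4λ) ≤ 1 / (2M)`, so
`u ↦ u² ‖θ‖² / (4λ) − L*(u)` is concave.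

The extended-real bookkeeping rests on the dichotomy that `L*(u)` is either real or `⊤`, and in the
latter case the objective is `⊥` (`dualObjE_eq_bot`).
-/

open MeasureTheory ProbabilityTheory Filter ENNReal
open scoped RealInnerProductSpace Topology NNReal

noncomputable section

/-- Convex conjugate `L*(v) = sup_u (uv − L(u))`, valued in `EReal`. -/
noncomputable def conjE (L : ℝ → ℝ) (v : ℝ) : EReal :=
  ⨆ u : ℝ, ((u * v - L u : ℝ) : EReal)

/-- The term `(u²/(4λ))‖θ‖²`, interpreted for `λ = 0` as the perspective-function limit:
`0` if `u • θ = 0` and `+∞` otherwise. -/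
noncomputable def perspTerm {d : ℕ} (θ : EuclideanSpace ℝ (Fin d)) (u lam : ℝ) : EReal :=
  letI : Decidable (u • θ = 0) := Classical.dec _
  if lam = 0 then (if u • θ = 0 then (0 : EReal) else ⊤)
  else ((u ^ 2 / (4 * lam) * ‖θ‖ ^ 2 : ℝ) : EReal)

/-- Inner dual objective
`λε + (1/n)∑ᵢ [uᵢ(yᵢ − θᵀxᵢ) + (uᵢ²/(4λ))‖θ‖² − L*(uᵢ)]`, valued in `EReal`. -/
noncomputable def dualObjE {d n : ℕ} (x : Fin n → EuclideanSpace ℝ (Fin d))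
    (y : Fin n → ℝ) (ε : ℝ) (L : ℝ → ℝ) (θ : EuclideanSpace ℝ (Fin d)) (lam : ℝ)
    (u : EuclideanSpace ℝ (Fin n)) : EReal :=
  ((lam * ε : ℝ) : EReal) +
    (((n : ℝ)⁻¹ : ℝ) : EReal) *
      ∑ i, ((((u i) * (y i - ⟪θ, x i⟫) : ℝ) : EReal)
              + perspTerm θ (u i) lam - conjE L (u i))

/-! ### The convex conjugate -/

lemma conjE_real_or_top (L : ℝ → ℝ) (v : ℝ) : conjE L v = ⊤ ∨ ∃ c : ℝ, conjE L v = (c : EReal) := by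
  have h : ((0 * v - L 0 : ℝ) : EReal) ≤ conjE L v :=
    le_iSup (fun u : ℝ => ((u * v - L u : ℝ) : EReal)) 0
  rcases hc : conjE L v with _ | _ | c
  · rw [hc] at h
    exact absurd (le_bot_iff.mp h) (EReal.coe_ne_bot _)
  · exact Or.inl rfl
  · exact Or.inr ⟨c, rfl⟩

lemma le_of_conjE_eq {L : ℝ → ℝ} {v c : ℝ} (h : conjE L v = (c : EReal)) (a : ℝ) :
    a * v - L a ≤ c := by
  have h1 : ((a * v - L a : ℝ) : EReal) ≤ conjE L v :=
    le_iSup (fun u : ℝ => ((u * v - L u : ℝ) : EReal)) a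
  rw [h] at h1
  exact_mod_cast h1

lemma exists_conjE_eq_of_le {L : ℝ → ℝ} {v r : ℝ} (h : ∀ a, a * v - L a ≤ r) :
    ∃ c : ℝ, conjE L v = (c : EReal) ∧ c ≤ r := by
  have hle : conjE L v ≤ (r : EReal) := iSup_le fun a => by exact_mod_cast h a
  rcases conjE_real_or_top L v with ht | ⟨c, hc⟩
  · rw [ht] at hle
    exact absurd (top_le_iff.mp hle) (EReal.coe_ne_top _)
  · refine ⟨c, hc, ?_⟩
    rw [hc] at hle
    exact_mod_cast hle

lemma tangent_le {L : ℝ → ℝ} (hconv : ConvexOn ℝ Set.univ L) (hdiff : Differentiable ℝ L)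
    (z a : ℝ) : L z + deriv L z * (a - z) ≤ L a := by
  rcases lt_trichotomy a z with h | h | h
  · have := hconv.slope_le_of_hasDerivAt (Set.mem_univ a) (Set.mem_univ z) h
      (hdiff z).hasDerivAt
    rw [slope_def_field, div_le_iff₀ (by linarith)] at this
    linarith
  · subst h; simp
  · have := hconv.le_slope_of_hasDerivAt (Set.mem_univ z) (Set.mem_univ a) h
      (hdiff z).hasDerivAt
    rw [slope_def_field, le_div_iff₀ (by linarith)] at this
    linarith

/-- Any `u` can be replaced by a `w` with `w² ≥ L'(z)²` and `w² ≥ u²` without decreasing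
`u z − L*(u)`: keep `u` if it is already large, otherwise take the maximiser `L'(z)`. -/
lemma exists_better_coord {L : ℝ → ℝ} (hconv : ConvexOn ℝ Set.univ L)
    (hdiff : Differentiable ℝ L) (z u c : ℝ) (hc : conjE L u = (c : EReal)) :
    ∃ w c' : ℝ, conjE L w = (c' : EReal) ∧ (deriv L z) ^ 2 ≤ w ^ 2 ∧ u ^ 2 ≤ w ^ 2 ∧
      u * z - c ≤ w * z - c' := by
  by_cases h : (deriv L z) ^ 2 ≤ u ^ 2
  · exact ⟨u, c, hc, h, le_rfl, le_rfl⟩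
  · obtain ⟨c', hc', hle⟩ := exists_conjE_eq_of_le (L := L) (v := deriv L z)
      (r := deriv L z * z - L z) (fun a => by linarith [tangent_le hconv hdiff z a])
    refine ⟨deriv L z, c', hc', le_rfl, (not_le.mp h).le, ?_⟩
    linarith [le_of_conjE_eq hc z]

/-- Integrated form of `M`-smoothness, expressing that `(M/2) z² − L(z)` is convex. -/
lemma smooth_chord {L : ℝ → ℝ} {M : ℝ} (hM : 0 < M) (hdiff : Differentiable ℝ L)
    (hs : LipschitzWith (Real.toNNReal M) (deriv L)) (a b t : ℝ) (h0 : 0 ≤ t) (h1 : t ≤ 1) :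
    t * L a + (1 - t) * L b
      ≤ L (t * a + (1 - t) * b) + M / 2 * (t * (1 - t)) * (a - b) ^ 2 := by
  have hd : ∀ z, HasDerivAt (fun z => M / 2 * z ^ 2 - L z) (M * z - deriv L z) z := by
    intro z
    have h := ((hasDerivAt_pow 2 z).const_mul (M / 2)).sub (hdiff z).hasDerivAt
    refine HasDerivAt.congr_deriv h ?_
    push_cast
    ring
  have hder : deriv (fun z => M / 2 * z ^ 2 - L z) = fun z => M * z - deriv L z :=
    funext fun z => (hd z).deriv
  have hmono : Monotone (deriv (fun z => M / 2 * z ^ 2 - L z)) := by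
    rw [hder]
    intro p q hpq
    have h := hs.dist_le_mul q p
    rw [Real.dist_eq, Real.dist_eq, Real.coe_toNNReal M hM.le,
      abs_of_nonneg (sub_nonneg.mpr hpq)] at h
    have := le_abs_self (deriv L q - deriv L p)
    simp only
    linarith
  have hconv := hmono.convexOn_univ_of_deriv (fun z => (hd z).differentiableAt)
  have h := hconv.2 (Set.mem_univ a) (Set.mem_univ b) h0 (sub_nonneg.mpr h1)
    (add_sub_cancel t 1)
  simp only [smul_eq_mul] at h
  linarith

/-- The conjugate of an `M`-smooth function is `1/M`-strongly convex (on its domain, which is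
therefore convex). -/
lemma conjE_strong {L : ℝ → ℝ} {M : ℝ} (hM : 0 < M) (hdiff : Differentiable ℝ L)
    (hs : LipschitzWith (Real.toNNReal M) (deriv L)) {u v c e t : ℝ}
    (hu : conjE L u = (c : EReal)) (hv : conjE L v = (e : EReal)) (h0 : 0 ≤ t) (h1 : t ≤ 1) :
    ∃ f : ℝ, conjE L (t * u + (1 - t) * v) = (f : EReal) ∧
      f ≤ t * c + (1 - t) * e - 1 / (2 * M) * (t * (1 - t)) * (u - v) ^ 2 := by
  refine exists_conjE_eq_of_le fun z => ?_
  -- `s` maximises `(u - v) s - M s² / 2`.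
  obtain ⟨s, hsd⟩ : ∃ s, s = (u - v) / M := ⟨_, rfl⟩
  have huv : u - v = M * s := by rw [hsd]; field_simp
  have e1 := mul_le_mul_of_nonneg_left (le_of_conjE_eq hu (z + (1 - t) * s)) h0
  have e2 := mul_le_mul_of_nonneg_left (le_of_conjE_eq hv (z - t * s)) (sub_nonneg.mpr h1)
  have e3 := smooth_chord hM hdiff hs (z + (1 - t) * s) (z - t * s) t h0 h1
  rw [show t * (z + (1 - t) * s) + (1 - t) * (z - t * s) = z by ring,
    show z + (1 - t) * s - (z - t * s) = s by ring] at e3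
  have e4 : 1 / (2 * M) * (t * (1 - t)) * (u - v) ^ 2 = M / 2 * (t * (1 - t)) * s ^ 2 := by
    rw [huv]; field_simp
  have e5 : u = v + M * s := by linarith
  rw [e4]
  subst e5
  nlinarith [e1, e2, e3]

/-! ### The extended-real objective -/

/-- Outside the degenerate case `λ = 0`, `θ ≠ 0`, the perspective term is an ordinary quadratic;
for `λ = 0`, `θ = 0` the coefficient `‖θ‖² / (4λ)` is `0 / 0 = 0`, as it should be. -/
lemma perspTerm_eq {d : ℕ} (θ : EuclideanSpace ℝ (Fin d)) (u lam : ℝ) (h : lam ≠ 0 ∨ θ = 0) :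
    perspTerm θ u lam = ((‖θ‖ ^ 2 / (4 * lam) * u ^ 2 : ℝ) : EReal) := by
  unfold perspTerm
  by_cases hl : lam = 0
  · have hθ : θ = 0 := h.resolve_left (not_not.mpr hl)
    simp [hl, hθ]
  · rw [if_neg hl]
    congr 1
    ring

lemma perspTerm_zero_eq_top {d : ℕ} {θ : EuclideanSpace ℝ (Fin d)} {u : ℝ} (hu : u ≠ 0)
    (hθ : θ ≠ 0) : perspTerm θ u 0 = ⊤ := by
  simp [perspTerm, hu, hθ]

lemma perspTerm_ne_bot {d : ℕ} (θ : EuclideanSpace ℝ (Fin d)) (u lam : ℝ) :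
    perspTerm θ u lam ≠ ⊥ := by
  unfold perspTerm
  split_ifs
  · simp
  · simp
  · exact EReal.coe_ne_bot _

lemma ereal_sum_coe {n : ℕ} (f : Fin n → ℝ) :
    ∑ i, ((f i : ℝ) : EReal) = ((∑ i, f i : ℝ) : EReal) :=
  (map_sum (⟨⟨fun r : ℝ => (r : EReal), rfl⟩, EReal.coe_add⟩ : ℝ →+ EReal) f Finset.univ).symm

lemma ereal_sum_ne_bot {n : ℕ} (s : Finset (Fin n)) (f : Fin n → EReal) (h : ∀ i, f i ≠ ⊥) :
    ∑ i ∈ s, f i ≠ ⊥ := by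
  classical
  induction s using Finset.induction_on with
  | empty => simp
  | insert a s ha ih =>
    rw [Finset.sum_insert ha, Ne, EReal.add_eq_bot_iff, not_or]
    exact ⟨h a, ih⟩

lemma dualObjE_eq_bot {d n : ℕ} (hn : 0 < n) (x : Fin n → EuclideanSpace ℝ (Fin d))
    (y : Fin n → ℝ) (ε : ℝ) (L : ℝ → ℝ) (θ : EuclideanSpace ℝ (Fin d)) (lam : ℝ)
    (u : EuclideanSpace ℝ (Fin n)) (i : Fin n) (hi : conjE L (u i) = ⊤) :
    dualObjE x y ε L θ lam u = ⊥ := by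
  have hn' : (0 : ℝ) < (n : ℝ)⁻¹ := by positivity
  unfold dualObjE
  rw [← Finset.add_sum_erase _ _ (Finset.mem_univ i), hi, EReal.sub_top, EReal.bot_add,
    EReal.coe_mul_bot_of_pos hn', EReal.add_bot]

lemma dualObjE_eq_coe {d n : ℕ} (x : Fin n → EuclideanSpace ℝ (Fin d))
    (y : Fin n → ℝ) (ε : ℝ) (L : ℝ → ℝ) (θ : EuclideanSpace ℝ (Fin d)) (lam : ℝ)
    (u : EuclideanSpace ℝ (Fin n)) (c : Fin n → ℝ) (hc : ∀ i, conjE L (u i) = (c i : EReal))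
    (h : lam ≠ 0 ∨ θ = 0) :
    dualObjE x y ε L θ lam u = ((lam * ε + (n : ℝ)⁻¹ *
      ∑ i, (u i * (y i - ⟪θ, x i⟫) + ‖θ‖ ^ 2 / (4 * lam) * (u i) ^ 2 - c i) : ℝ) : EReal) := by
  unfold dualObjE
  rw [EReal.coe_add (lam * ε), EReal.coe_mul (n : ℝ)⁻¹, ← ereal_sum_coe]
  congr 2
  refine Finset.sum_congr rfl fun i _ => ?_
  rw [hc i, perspTerm_eq θ (u i) lam h, EReal.coe_sub, EReal.coe_add]

lemma dualObjE_zero_eq_top {d n : ℕ} (hn : 0 < n) (x : Fin n → EuclideanSpace ℝ (Fin d))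
    (y : Fin n → ℝ) (ε : ℝ) (L : ℝ → ℝ) {θ : EuclideanSpace ℝ (Fin d)} (hθ : θ ≠ 0)
    (u : EuclideanSpace ℝ (Fin n)) (c : Fin n → ℝ) (hc : ∀ i, conjE L (u i) = (c i : EReal))
    (i : Fin n) (hi : u i ≠ 0) :
    dualObjE x y ε L θ 0 u = ⊤ := by
  have hn' : (0 : ℝ) < (n : ℝ)⁻¹ := by positivity
  have hne : ∀ j, (((u j * (y j - ⟪θ, x j⟫) : ℝ) : EReal) + perspTerm θ (u j) 0
      - conjE L (u j)) ≠ ⊥ := by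
    intro j
    rw [hc j, sub_eq_add_neg, ← EReal.coe_neg, Ne, EReal.add_eq_bot_iff, EReal.add_eq_bot_iff]
    simp only [EReal.coe_ne_bot, perspTerm_ne_bot, or_self, not_false_eq_true]
  unfold dualObjE
  rw [← Finset.add_sum_erase _ _ (Finset.mem_univ i), hc i, perspTerm_zero_eq_top hi hθ,
    EReal.coe_add_top, EReal.top_sub_coe, EReal.top_add_of_ne_bot (ereal_sum_ne_bot _ _ hne),
    EReal.coe_mul_top_of_pos hn', EReal.coe_add_top]

/-! ### Lowering the multiplier -/

/-- With `N = ‖θ‖²` and `S` the mean of the `uᵢ²`, the function `λ ↦ λ ε + N S / (4λ)` is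
at least as large at every `l ∈ (0, l₀]` as at `l₀`: by convexity it suffices that its slope at
`l₀` is nonpositive. -/
lemma multiplier_gain {N S Ln ε l l₀ : ℝ} (hN : 0 ≤ N) (hl : 0 < l) (hll : l ≤ l₀)
    (hS : Ln ≤ S) (hLn : 0 < Ln) (hε : ε * (4 * l₀ ^ 2) ≤ N * Ln) :
    l₀ * ε + N / (4 * l₀) * S ≤ l * ε + N / (4 * l) * S := by
  have hl₀ : 0 < l₀ := hl.trans_le hll
  have hε' : ε ≤ N * S / (4 * l₀ * l) := by
    have h1 : ε ≤ N * Ln / (4 * l₀ ^ 2) := by rwa [le_div_iff₀ (by positivity)]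
    refine h1.trans ?_
    have hS0 : 0 ≤ S := hLn.le.trans hS
    apply div_le_div₀ (by positivity) (by gcongr) (by positivity)
    nlinarith
  have h2 := mul_le_mul_of_nonneg_left hε' (sub_nonneg.mpr hll)
  have h3 : (l₀ - l) * (N * S / (4 * l₀ * l)) = N / (4 * l) * S - N / (4 * l₀) * S := by
    field_simp
  linarith

lemma iSup_dualObjE_le {d n : ℕ} (hn : 0 < n)
    (x : Fin n → EuclideanSpace ℝ (Fin d)) (y : Fin n → ℝ)
    (L : ℝ → ℝ) (hLconv : ConvexOn ℝ Set.univ L) (hLdiff : Differentiable ℝ L)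
    (Ln : ℝ) (hLn : 0 < Ln) (θ : EuclideanSpace ℝ (Fin d)) (hθ : θ ≠ 0)
    (hLnle : Ln ≤ (1 / (n : ℝ)) * ∑ i, (deriv L (y i - ⟪θ, x i⟫)) ^ 2)
    (ε l l₀ : ℝ) (hl : 0 ≤ l) (hll : l < l₀) (hε : ε * (4 * l₀ ^ 2) ≤ ‖θ‖ ^ 2 * Ln) :
    (⨆ u : EuclideanSpace ℝ (Fin n), dualObjE x y ε L θ l₀ u) ≤
      ⨆ u : EuclideanSpace ℝ (Fin n), dualObjE x y ε L θ l u := by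
  refine iSup_le fun u => ?_
  have hn' : (0 : ℝ) < (n : ℝ)⁻¹ := by positivity
  have hl₀ : 0 < l₀ := hl.trans_lt hll
  by_cases htop : ∃ i, conjE L (u i) = ⊤
  · obtain ⟨i, hi⟩ := htop
    rw [dualObjE_eq_bot hn x y ε L θ l₀ u i hi]
    exact bot_le
  push Not at htop
  choose c hc using fun i => (conjE_real_or_top L (u i)).resolve_left (htop i)
  choose w c' hc' hw1 hw2 hw3 using fun i =>
    exists_better_coord hLconv hLdiff (y i - ⟪θ, x i⟫) (u i) (c i) (hc i)
  refine le_iSup_of_le (WithLp.toLp 2 w) ?_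
  have hS : Ln ≤ (n : ℝ)⁻¹ * ∑ i, (w i) ^ 2 := by
    refine hLnle.trans ?_
    rw [one_div]
    exact mul_le_mul_of_nonneg_left (Finset.sum_le_sum fun i _ => hw1 i) hn'.le
  rcases hl.eq_or_lt with h0 | hlpos
  · -- At `λ = 0` the supremum is `⊤`, because some coordinate of `w` is nonzero.
    subst h0
    obtain ⟨i, hi⟩ : ∃ i, w i ≠ 0 := by
      by_contra! hw
      simp [hw] at hS
      linarith
    rw [dualObjE_zero_eq_top hn x y ε L hθ (WithLp.toLp 2 w) c' hc' i hi]
    exact le_top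
  · rw [dualObjE_eq_coe x y ε L θ l₀ u c hc (Or.inl hl₀.ne'),
      dualObjE_eq_coe x y ε L θ l (WithLp.toLp 2 w) c' hc' (Or.inl hlpos.ne'), EReal.coe_le_coe_iff]
    have hgain := multiplier_gain (sq_nonneg ‖θ‖) hlpos hll.le hS hLn hε
    have hstep : ∑ i, (u i * (y i - ⟪θ, x i⟫) + ‖θ‖ ^ 2 / (4 * l₀) * (u i) ^ 2 - c i) ≤
        ∑ i, (w i * (y i - ⟪θ, x i⟫) - c' i) + ‖θ‖ ^ 2 / (4 * l₀) * ∑ i, (w i) ^ 2 := by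
      rw [Finset.mul_sum, ← Finset.sum_add_distrib]
      refine Finset.sum_le_sum fun i _ => ?_
      have := mul_le_mul_of_nonneg_left (hw2 i)
        (show 0 ≤ ‖θ‖ ^ 2 / (4 * l₀) by positivity)
      linarith [hw3 i]
    have hsplit : ∑ i, (w i * (y i - ⟪θ, x i⟫) + ‖θ‖ ^ 2 / (4 * l) * (w i) ^ 2 - c' i) =
        ∑ i, (w i * (y i - ⟪θ, x i⟫) - c' i) + ‖θ‖ ^ 2 / (4 * l) * ∑ i, (w i) ^ 2 := by
      rw [Finset.mul_sum, ← Finset.sum_add_distrib]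
      exact Finset.sum_congr rfl fun i _ => by ring
    have hstep' := mul_le_mul_of_nonneg_left hstep hn'.le
    simp only
    rw [hsplit]
    linarith

/-! ### Concavity in `u` -/

lemma dualObjE_concave {d n : ℕ} (hn : 0 < n)
    (x : Fin n → EuclideanSpace ℝ (Fin d)) (y : Fin n → ℝ) (L : ℝ → ℝ)
    {M : ℝ} (hM : 0 < M) (hdiff : Differentiable ℝ L)
    (hs : LipschitzWith (Real.toNNReal M) (deriv L)) (ε : ℝ)
    (θ : EuclideanSpace ℝ (Fin d)) (lam : ℝ) (h : lam ≠ 0 ∨ θ = 0)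
    (hκ : ‖θ‖ ^ 2 / (4 * lam) ≤ 1 / (2 * M))
    (u v : EuclideanSpace ℝ (Fin n)) (t : ℝ) (h0 : 0 ≤ t) (h1 : t ≤ 1) :
    (t : EReal) * dualObjE x y ε L θ lam u
        + ((1 - t : ℝ) : EReal) * dualObjE x y ε L θ lam v ≤
      dualObjE x y ε L θ lam (t • u + (1 - t) • v) := by
  have hn' : (0 : ℝ) < (n : ℝ)⁻¹ := by positivity
  rcases h0.eq_or_lt with rfl | h0'
  · simp
  rcases h1.eq_or_lt with rfl | h1'
  · simp
  have h1p : 0 < 1 - t := by linarith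
  by_cases hut : ∃ i, conjE L (u i) = ⊤
  · obtain ⟨i, hi⟩ := hut
    rw [dualObjE_eq_bot hn x y ε L θ lam u i hi, EReal.coe_mul_bot_of_pos h0', EReal.bot_add]
    exact bot_le
  by_cases hvt : ∃ i, conjE L (v i) = ⊤
  · obtain ⟨i, hi⟩ := hvt
    rw [dualObjE_eq_bot hn x y ε L θ lam v i hi, EReal.coe_mul_bot_of_pos h1p, EReal.add_bot]
    exact bot_le
  push Not at hut hvt
  choose c hc using fun i => (conjE_real_or_top L (u i)).resolve_left (hut i)
  choose e he using fun i => (conjE_real_or_top L (v i)).resolve_left (hvt i)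
  choose f hf hfle using fun i => conjE_strong hM hdiff hs (hc i) (he i) h0 h1
  rw [dualObjE_eq_coe x y ε L θ lam u c hc h, dualObjE_eq_coe x y ε L θ lam v e he h,
    dualObjE_eq_coe x y ε L θ lam (t • u + (1 - t) • v) f (fun i => by simpa using hf i) h,
    ← EReal.coe_mul, ← EReal.coe_mul, ← EReal.coe_add, EReal.coe_le_coe_iff]
  set κ := ‖θ‖ ^ 2 / (4 * lam) with hκdef
  have hsum : t * ∑ i, (u i * (y i - ⟪θ, x i⟫) + κ * (u i) ^ 2 - c i)
      + (1 - t) * ∑ i, (v i * (y i - ⟪θ, x i⟫) + κ * (v i) ^ 2 - e i) ≤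
      ∑ i, ((t • u + (1 - t) • v) i * (y i - ⟪θ, x i⟫)
        + κ * ((t • u + (1 - t) • v) i) ^ 2 - f i) := by
    rw [Finset.mul_sum, Finset.mul_sum, ← Finset.sum_add_distrib]
    refine Finset.sum_le_sum fun i _ => ?_
    have hi := hfle i
    have hk := mul_le_mul_of_nonneg_right hκ
      (show 0 ≤ t * (1 - t) * (u i - v i) ^ 2 by positivity)
    simp only [PiLp.add_apply, PiLp.smul_apply, smul_eq_mul]
    nlinarith [hi, hk]
  have := mul_le_mul_of_nonneg_left hsum hn'.le
  linarith

/-- Lemma: concavity in `u` of the type-2 dual.  Under `M`-smoothness of the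
convex loss `L`, with `Θ = {‖θ‖ ≤ R_θ√d}`, `0 < L̲ₙ ≤ E_{P_n}[L'(Y−θᵀX)²]` on `Θ`, and
`ε = ε₀/n` with `ε₀ ≤ ρ⁻¹M⁻²R_θ⁻²L̲ₙ` (`ρ = d/n`): the dual problem has the same optimal
value when `λ` is restricted to `Λ = {λ ≥ 0 : λ ≥ M R_θ √d ‖θ‖ / 2}`, and on `Λ` the
objective is concave in `u`. -/
theorem dual_concave_in_u_p2
    {d n : ℕ} (hd : 0 < d) (hn : 0 < n)
    (x : Fin n → EuclideanSpace ℝ (Fin d)) (y : Fin n → ℝ)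
    (L : ℝ → ℝ) (hLconv : ConvexOn ℝ Set.univ L) (hLcont : Continuous L)
    (M : ℝ) (hM : 0 < M) (hLdiff : Differentiable ℝ L)
    (hLsmooth : LipschitzWith (Real.toNNReal M) (deriv L))
    (Rθ : ℝ) (hRθ : 0 < Rθ)
    (Θ : Set (EuclideanSpace ℝ (Fin d)))
    (hΘ : Θ = {θ | ‖θ‖ ≤ Rθ * Real.sqrt d})
    (Ln : ℝ) (hLn : 0 < Ln)
    (hLnle : ∀ θ ∈ Θ, Ln ≤ (1 / (n : ℝ)) * ∑ i, (deriv L (y i - ⟪θ, x i⟫)) ^ 2)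
    (ρ : ℝ) (hρ : ρ = (d : ℝ) / (n : ℝ))
    (ε ε₀ : ℝ) (hε : ε = ε₀ / (n : ℝ))
    (hε₀ : ε₀ ≤ ρ⁻¹ * M⁻¹ ^ 2 * Rθ⁻¹ ^ 2 * Ln) :
    -- the restricted and unrestricted problems have the same optimal value
    ((⨅ (p : {q : EuclideanSpace ℝ (Fin d) × ℝ // q.1 ∈ Θ ∧ 0 ≤ q.2}),
        ⨆ (u : EuclideanSpace ℝ (Fin n)),
          dualObjE x y ε L (p : EuclideanSpace ℝ (Fin d) × ℝ).1
            (p : EuclideanSpace ℝ (Fin d) × ℝ).2 u) =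
      ⨅ (p : {q : EuclideanSpace ℝ (Fin d) × ℝ //
          q.1 ∈ Θ ∧ 0 ≤ q.2 ∧ M * Rθ * Real.sqrt d * ‖q.1‖ / 2 ≤ q.2}),
        ⨆ (u : EuclideanSpace ℝ (Fin n)),
          dualObjE x y ε L (p : EuclideanSpace ℝ (Fin d) × ℝ).1
            (p : EuclideanSpace ℝ (Fin d) × ℝ).2 u) ∧
    -- on Λ the objective is concave in u
    (∀ θ ∈ Θ, ∀ lam : ℝ, M * Rθ * Real.sqrt d * ‖θ‖ / 2 ≤ lam →
      ∀ u v : EuclideanSpace ℝ (Fin n), ∀ t : ℝ, 0 ≤ t → t ≤ 1 →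
        (t : EReal) * dualObjE x y ε L θ lam u
            + ((1 - t : ℝ) : EReal) * dualObjE x y ε L θ lam v ≤
          dualObjE x y ε L θ lam (t • u + (1 - t) • v)) := by
  have hdR : (0 : ℝ) < d := by exact_mod_cast hd
  have hnR : (0 : ℝ) < n := by exact_mod_cast hn
  have hsq : Real.sqrt d ^ 2 = (d : ℝ) := Real.sq_sqrt hdR.le
  have hsd : 0 < Real.sqrt d := Real.sqrt_pos.mpr hdR
  have hεle : ε * (M ^ 2 * Rθ ^ 2 * d) ≤ Ln := by
    have h1 : ε ≤ Ln / (M ^ 2 * Rθ ^ 2 * d) := by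
      rw [hε, div_le_iff₀ hnR]
      refine hε₀.trans (le_of_eq ?_)
      rw [hρ]
      field_simp
    rwa [le_div_iff₀ (by positivity)] at h1
  refine ⟨le_antisymm ?_ ?_, ?_⟩
  · refine le_iInf fun p => ?_
    exact iInf_le_of_le ⟨p.1, p.2.1, p.2.2.1⟩ le_rfl
  · refine le_iInf ?_
    rintro ⟨⟨θ, l⟩, hθ, hl⟩
    simp only at hθ hl ⊢
    by_cases hlam : M * Rθ * Real.sqrt d * ‖θ‖ / 2 ≤ l
    · exact iInf_le_of_le ⟨(θ, l), hθ, hl, hlam⟩ le_rfl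
    · push Not at hlam
      have hθ0 : θ ≠ 0 := by
        rintro rfl
        simp at hlam
        linarith
      refine iInf_le_of_le
        ⟨(θ, M * Rθ * Real.sqrt d * ‖θ‖ / 2), hθ, hl.trans hlam.le, le_rfl⟩ ?_
      refine iSup_dualObjE_le hn x y L hLconv hLdiff Ln hLn θ hθ0 (hLnle θ hθ) ε l _ hl hlam ?_
      have h2 : ε * (4 * (M * Rθ * Real.sqrt d * ‖θ‖ / 2) ^ 2)
          = ‖θ‖ ^ 2 * (ε * (M ^ 2 * Rθ ^ 2 * d)) := by
        linear_combination ε * M ^ 2 * Rθ ^ 2 * ‖θ‖ ^ 2 * hsq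
      rw [h2]
      exact mul_le_mul_of_nonneg_left hεle (sq_nonneg _)
  · intro θ hθ lam hlam u v t h0 h1
    rw [hΘ, Set.mem_ofPred_eq] at hθ
    by_cases hθ0 : θ = 0
    · refine dualObjE_concave hn x y L hM hLdiff hLsmooth ε θ lam (Or.inr hθ0) ?_ u v t h0 h1
      rw [hθ0]
      simp only [norm_zero, ne_eq, OfNat.ofNat_ne_zero, not_false_eq_true, zero_pow, zero_div]
      positivity
    · have hpos : 0 < ‖θ‖ := norm_pos_iff.mpr hθ0
      have hlpos : 0 < lam := lt_of_lt_of_le (by positivity) hlam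
      refine dualObjE_concave hn x y L hM hLdiff hLsmooth ε θ lam (Or.inl hlpos.ne') ?_ u v t h0 h1
      rw [div_le_div_iff₀ (by positivity) (by positivity)]
      have h3 := mul_le_mul_of_nonneg_left hθ (show 0 ≤ M * ‖θ‖ by positivity)
      nlinarith [h3]
end
end

section
/- Assume L: ℝ → ℝ is proper, continuous, convex, and M-smooth, and that Θ = {θ ∈ ℝ^d : ‖θ‖ ≤ R_θ√d}. If λ = dλ₀ with λ₀ ≥ M R_θ²/2, then the objective function of the dual of the distributionally regularized problem, namely u ↦ (1/n)Σ_{i=1}^n [u_i(y_i − θᵀx_i) + (u_i²/(4λ))‖θ‖² − L*(u_i)], is concave in u for every θ ∈ Θ. -/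
/-!
`M`-smoothness of `L` makes `w ↦ (M/2) w² - L w` convex (its derivative is monotone). Testing the
suprema `L*(a)` and `L*(b)` at the points `z + (1-t)(a-b)/M` and `z - t(a-b)/M`, whose
`t`-average is `z`, turns this into strong convexity of the conjugate:
`L*(ta + (1-t)b) ≤ t L*(a) + (1-t) L*(b) - t(1-t)(a-b)²/(2M)` (`conjE_strongly_convex`).
On the ball `Θ` the quadratic coefficient satisfies `‖θ‖²/(4λ) ≤ 1/(2M)`, so the strong convexity
of `L*` dominates the convex quadratic in each summand.

Since `L*` never takes the value `⊥`, the objective is `⊥` as soon as one conjugate is `⊤`. For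
`0 < t < 1` the inequality is then trivial, and otherwise everything reduces to real numbers.
-/


open MeasureTheory ProbabilityTheory Filter ENNReal
open scoped RealInnerProductSpace Topology NNReal

noncomputable section

/-- Objective of the dual of the distributionally regularized problem:
`u ↦ (1/n)∑ᵢ [uᵢ(yᵢ − θᵀxᵢ) + (uᵢ²/(4λ))‖θ‖² − L*(uᵢ)]`, valued in `EReal`. -/
noncomputable def dreDualObjE {d n : ℕ} (x : Fin n → EuclideanSpace ℝ (Fin d))
    (y : Fin n → ℝ) (lam : ℝ) (L : ℝ → ℝ) (θ : EuclideanSpace ℝ (Fin d))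
    (u : EuclideanSpace ℝ (Fin n)) : EReal :=
  (((n : ℝ)⁻¹ : ℝ) : EReal) *
    ∑ i, ((((u i) * (y i - ⟪θ, x i⟫)
            + (u i) ^ 2 / (4 * lam) * ‖θ‖ ^ 2 : ℝ) : EReal)
          - conjE L (u i))

/-- The complement `(M/2) w² - L w` of an `M`-smooth function is convex. -/
lemma convexOn_quadratic_sub (L : ℝ → ℝ) (M : ℝ) (hM : 0 < M) (hLdiff : Differentiable ℝ L)
    (hLsmooth : LipschitzWith (Real.toNNReal M) (deriv L)) :
    ConvexOn ℝ Set.univ (fun w => M / 2 * w ^ 2 - L w) := by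
  have hder : ∀ w, HasDerivAt (fun w => M / 2 * w ^ 2 - L w) (M * w - deriv L w) w := by
    intro w
    have h := ((hasDerivAt_pow 2 w).const_mul (M / 2)).sub (hLdiff w).hasDerivAt
    refine h.congr_deriv ?_
    push_cast
    ring
  refine Monotone.convexOn_univ_of_deriv (fun w => (hder w).differentiableAt) ?_
  intro a b hab
  rw [(hder a).deriv, (hder b).deriv]
  have h := hLsmooth.dist_le_mul b a
  rw [Real.coe_toNNReal M hM.le, Real.dist_eq, Real.dist_eq, abs_of_nonneg (sub_nonneg.2 hab)] at h
  have h' := le_abs_self (deriv L b - deriv L a)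
  linarith

/-- Strong convexity of the conjugate of an `M`-smooth function, for upper bounds `A`, `B` of
the conjugate at `a`, `b`. -/
lemma conjE_strongly_convex (L : ℝ → ℝ) (M : ℝ) (hM : 0 < M) (hLdiff : Differentiable ℝ L)
    (hLsmooth : LipschitzWith (Real.toNNReal M) (deriv L)) {a b A B t : ℝ}
    (ht0 : 0 ≤ t) (ht1 : t ≤ 1) (hA : conjE L a ≤ A) (hB : conjE L b ≤ B) :
    conjE L (t * a + (1 - t) * b) ≤
      ((t * A + (1 - t) * B - t * (1 - t) * (a - b) ^ 2 / (2 * M) : ℝ) : EReal) := by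
  have hA' : ∀ w, w * a - L w ≤ A := fun w => by
    exact_mod_cast (le_iSup (fun u : ℝ => ((u * a - L u : ℝ) : EReal)) w).trans hA
  have hB' : ∀ w, w * b - L w ≤ B := fun w => by
    exact_mod_cast (le_iSup (fun u : ℝ => ((u * b - L u : ℝ) : EReal)) w).trans hB
  refine iSup_le fun z => ?_
  rw [EReal.coe_le_coe_iff]
  obtain ⟨e, he⟩ : ∃ e, e = (a - b) / M := ⟨_, rfl⟩
  have hab : a = b + M * e := by rw [he]; field_simp; ring
  have h1 := mul_le_mul_of_nonneg_left (hA' (z + (1 - t) * e)) ht0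
  have h2 := mul_le_mul_of_nonneg_left (hB' (z - t * e)) (sub_nonneg.2 ht1)
  have h3 := (convexOn_quadratic_sub L M hM hLdiff hLsmooth).2 (Set.mem_univ (z + (1 - t) * e))
    (Set.mem_univ (z - t * e)) ht0 (sub_nonneg.2 ht1) (by ring)
  have hz : t * (z + (1 - t) * e) + (1 - t) * (z - t * e) = z := by ring
  simp only [smul_eq_mul, hz] at h3
  have hq : t * (1 - t) * (a - b) ^ 2 / (2 * M) = t * (1 - t) * M * e ^ 2 / 2 := by
    rw [hab]; field_simp; ring
  rw [hq]
  subst hab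
  linarith

lemma conjE_ne_bot (L : ℝ → ℝ) (v : ℝ) : conjE L v ≠ ⊥ := by
  intro h
  have h0 : ((0 * v - L 0 : ℝ) : EReal) ≤ conjE L v :=
    le_iSup (fun u : ℝ => ((u * v - L u : ℝ) : EReal)) 0
  exact EReal.coe_ne_bot _ (le_bot_iff.1 (h ▸ h0))

lemma EReal_coe_finset_sum {ι : Type*} (s : Finset ι) (f : ι → ℝ) :
    ((∑ i ∈ s, f i : ℝ) : EReal) = ∑ i ∈ s, (f i : EReal) :=
  map_sum (⟨⟨(Real.toEReal), EReal.coe_zero⟩, EReal.coe_add⟩ : ℝ →+ EReal) f s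

/-- Where the objective is not `⊥`, all the conjugates in it are finite. -/
lemma exists_conjE_eq_coe {d n : ℕ} (hn : 0 < n) (x : Fin n → EuclideanSpace ℝ (Fin d))
    (y : Fin n → ℝ) (lam : ℝ) (L : ℝ → ℝ) (θ : EuclideanSpace ℝ (Fin d))
    (u : EuclideanSpace ℝ (Fin n)) (h : dreDualObjE x y lam L θ u ≠ ⊥) (i : Fin n) :
    ∃ A : ℝ, conjE L (u i) = A := by
  by_cases hi : conjE L (u i) = ⊤
  · refine absurd ?_ h
    unfold dreDualObjE
    rw [← Finset.add_sum_erase _ _ (Finset.mem_univ i), hi, EReal.sub_top, EReal.bot_add]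
    exact EReal.coe_mul_bot_of_pos (by positivity)
  · exact ⟨_, (EReal.coe_toReal hi (conjE_ne_bot L _)).symm⟩

/-- On the ball `Θ` the coefficient of `uᵢ²` is at most the strong convexity constant of `L*`. -/
lemma quadratic_coeff_le {d : ℕ} (hd : 0 < d) {M Rθ lam lam₀ : ℝ} (hM : 0 < M) (hRθ : 0 < Rθ)
    (hlam : lam = (d : ℝ) * lam₀) (hlam₀ : M * Rθ ^ 2 / 2 ≤ lam₀)
    {r : ℝ} (hr0 : 0 ≤ r) (hr : r ≤ Rθ * Real.sqrt d) :
    r ^ 2 / (4 * lam) ≤ 1 / (2 * M) := by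
  have hd' : (0 : ℝ) < d := by exact_mod_cast hd
  have h0 : 0 < lam₀ := lt_of_lt_of_le (by positivity) hlam₀
  have hr2 : r ^ 2 ≤ Rθ ^ 2 * d := by
    have h := pow_le_pow_left₀ hr0 hr 2
    rwa [mul_pow, Real.sq_sqrt hd'.le] at h
  rw [hlam, div_le_div_iff₀ (by positivity) (by positivity)]
  nlinarith [mul_le_mul_of_nonneg_left hlam₀ hd'.le, mul_le_mul_of_nonneg_left hr2 hM.le]

/-- Lemma: concavity in `u` of the regularized dual.  If `L` is proper,
continuous, convex and `M`-smooth, `Θ = {‖θ‖ ≤ R_θ√d}`, and `λ = dλ₀` with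
`λ₀ ≥ M R_θ²/2`, then for every `θ ∈ Θ` the dual objective is concave in `u`. -/
theorem dre_dual_concave_in_u
    {d n : ℕ} (hd : 0 < d) (hn : 0 < n)
    (x : Fin n → EuclideanSpace ℝ (Fin d)) (y : Fin n → ℝ)
    (L : ℝ → ℝ) (hLconv : ConvexOn ℝ Set.univ L) (hLcont : Continuous L)
    (M : ℝ) (hM : 0 < M) (hLdiff : Differentiable ℝ L)
    (hLsmooth : LipschitzWith (Real.toNNReal M) (deriv L))
    (Rθ : ℝ) (hRθ : 0 < Rθ)
    (Θ : Set (EuclideanSpace ℝ (Fin d)))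
    (hΘ : Θ = {θ | ‖θ‖ ≤ Rθ * Real.sqrt d})
    (lam lam₀ : ℝ) (hlam : lam = (d : ℝ) * lam₀) (hlam₀ : M * Rθ ^ 2 / 2 ≤ lam₀) :
    ∀ θ ∈ Θ, ∀ u v : EuclideanSpace ℝ (Fin n), ∀ t : ℝ, 0 ≤ t → t ≤ 1 →
      (t : EReal) * dreDualObjE x y lam L θ u
          + ((1 - t : ℝ) : EReal) * dreDualObjE x y lam L θ v ≤
        dreDualObjE x y lam L θ (t • u + (1 - t) • v) := by
  intro θ hθ u v t ht0 ht1
  rw [hΘ] at hθ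
  have hcoef := quadratic_coeff_le hd hM hRθ hlam hlam₀ (norm_nonneg θ) hθ
  -- At the endpoints `0 * ⊥ = 0` in `EReal`, so an infinite value there is harmless.
  rcases ht0.eq_or_lt with rfl | ht0'
  · simp
  rcases ht1.eq_or_lt with rfl | ht1'
  · simp
  have hs : 0 < 1 - t := sub_pos.2 ht1'
  by_cases hu : dreDualObjE x y lam L θ u = ⊥
  · rw [hu, EReal.coe_mul_bot_of_pos ht0', EReal.bot_add]
    exact bot_le
  by_cases hv : dreDualObjE x y lam L θ v = ⊥
  · rw [hv, EReal.coe_mul_bot_of_pos hs, EReal.add_bot]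
    exact bot_le
  choose A hA using exists_conjE_eq_coe hn x y lam L θ u hu
  choose B hB using exists_conjE_eq_coe hn x y lam L θ v hv
  unfold dreDualObjE
  simp only [hA, hB]
  have hC := fun i => conjE_strongly_convex L M hM hLdiff hLsmooth ht0 ht1 (hA i).le (hB i).le
  have hn' : (0 : ℝ) ≤ (n : ℝ)⁻¹ := by positivity
  refine le_trans ?_ (mul_le_mul_of_nonneg_left
    (Finset.sum_le_sum fun i _ => EReal.sub_le_sub le_rfl (hC i)) (EReal.coe_nonneg.2 hn'))
  simp only [← EReal.coe_sub, ← EReal_coe_finset_sum, ← EReal.coe_mul, ← EReal.coe_add]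
  rw [EReal.coe_le_coe_iff, mul_left_comm t, mul_left_comm (1 - t), ← mul_add, Finset.mul_sum,
    Finset.mul_sum, ← Finset.sum_add_distrib]
  refine mul_le_mul_of_nonneg_left (Finset.sum_le_sum fun i _ => ?_) hn'
  simp only [PiLp.add_apply, PiLp.smul_apply, smul_eq_mul]
  have hkey := mul_le_mul_of_nonneg_left hcoef
    (mul_nonneg (mul_nonneg ht0 hs.le) (sq_nonneg (u i - v i)))
  simp only [div_eq_mul_inv, one_mul] at hkey ⊢
  linarith
end
end
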